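/- Let F : ℝ^n → ℝ^n be a continuously differentiable vector field with div F = 0 whose flow ψ^t is defined for all time and is a diffeomorphism for each t. Then ψ^t preserves Lebesgue volume: for every measurable set A and every t ≥ 0, the Lebesgue measure of ψ^t(A) equals that of A. In particular, the Hamiltonian vector field F(x,v) = (∇_v H(x,v), −∇_x H(x,v)) for twice continuously differentiable H is divergence-free, so the Hamiltonian flow preserves volume (Liouville's theorem). -/

import Mathlib

open MeasureTheory

/-- Divergence of a vector field as the trace of its (Fréchet) derivative. -/
noncomputable def divg {M : Type*} [NormedAddCommGroup M] [NormedSpace ℝ M]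
    (F : M → M) (x : M) : ℝ :=
  LinearMap.trace ℝ M (fderiv ℝ F x).toLinearMap

/-!
The flow property gives `Dψ^t = Dψ^(t-s)(ψ^s) ∘ Dψ^s`, so the time derivative of `det Dψ^t` is
determined by the one at time `0`. Since the field is only `C¹`, the latter is not computed by
exchanging derivatives: strict differentiability of `F` and a mean value inequality in time,
uniform in the starting point, give `ψ^s p - ψ^s z = (p - z) + s • DF(z) (p - z) + o(s • (p - z))`,
hence `d/ds Dψ^s = DF` at `s = 0`. With Jacobi's formula this yields Liouville's equation
`d/dt det Dψ^t = div F(ψ^t) * det Dψ^t`. If `div F = 0`, then `det Dψ^t = 1`, and the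
change-of-variables formula gives the invariance of volume.

A Hamiltonian field is the constant antisymmetric Poisson tensor applied to `dH`, so its divergence
is the trace of an antisymmetric form against the symmetric second derivative of `H`.
-/

section IntegralCurves

open Set
open scoped Manifold

variable {E : Type*} [NormedAddCommGroup E] [NormedSpace ℝ E] {F : E → E} {γ γ' : ℝ → E}
  {t₀ : ℝ}

theorem isIntegralCurveOn_Ioo_eqOn_of_contDiff {a b : ℝ} (ht₀ : t₀ ∈ Ioo a b)
    (hF : ContDiff ℝ 1 F) (hγ : IsIntegralCurveOn γ (fun _ ↦ F) (Ioo a b))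
    (hγ' : IsIntegralCurveOn γ' (fun _ ↦ F) (Ioo a b)) (h : γ t₀ = γ' t₀) :
    EqOn γ γ' (Ioo a b) :=
  isMIntegralCurveOn_Ioo_eqOn_of_contMDiff_boundaryless (I := 𝓘(ℝ, E)) (v := F) ht₀
    (contMDiff_vectorSpace_iff_contDiff.2 hF)
    (fun t ht ↦ (hγ t ht).hasFDerivWithinAt.hasMFDerivWithinAt)
    (fun t ht ↦ (hγ' t ht).hasFDerivWithinAt.hasMFDerivWithinAt) h

theorem isIntegralCurve_eq_of_contDiff (hF : ContDiff ℝ 1 F)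
    (hγ : IsIntegralCurve γ (fun _ ↦ F)) (hγ' : IsIntegralCurve γ' (fun _ ↦ F))
    (h : γ t₀ = γ' t₀) : γ = γ' :=
  isMIntegralCurve_Ioo_eq_of_contMDiff_boundaryless (I := 𝓘(ℝ, E)) (v := F)
    (contMDiff_vectorSpace_iff_contDiff.2 hF)
    (fun t ↦ (hγ t).hasFDerivAt.hasMFDerivAt)
    (fun t ↦ (hγ' t).hasFDerivAt.hasMFDerivAt) h

end IntegralCurves

section MeanValue

open Filter Asymptotics Topology

variable {α E G : Type*} [NormedAddCommGroup E] [NormedSpace ℝ E] [NormedAddCommGroup G]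
  [NormedSpace ℝ G] {l : Filter α} {f f' : ℝ → α → E} {g : α → G} {t₀ : ℝ}

theorem isBigOWith_sub_of_hasDerivAt {c : ℝ}
    (hf : ∀ a t, HasDerivAt (fun s ↦ f s a) (f' t a) t)
    (hf' : IsBigOWith c (𝓝 t₀ ×ˢ l) (fun q ↦ f' q.1 q.2) fun q ↦ g q.2) :
    IsBigOWith c (𝓝 t₀ ×ˢ l) (fun q ↦ f q.1 q.2 - f t₀ q.2) fun q ↦ (q.1 - t₀) • g q.2 := by
  rw [isBigOWith_iff, (Metric.nhds_basis_ball.prod l.basis_sets).eventually_iff] at hf' ⊢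
  obtain ⟨⟨δ, U⟩, ⟨hδ, hU⟩, bound⟩ := hf'
  refine ⟨(δ, U), ⟨hδ, hU⟩, fun ⟨t, a⟩ ⟨ht, ha⟩ ↦ ?_⟩
  calc ‖f t a - f t₀ a‖ ≤ c * ‖g a‖ * ‖t - t₀‖ :=
        (convex_ball t₀ δ).norm_image_sub_le_of_norm_hasDerivWithin_le
          (fun s _ ↦ (hf a s).hasDerivWithinAt) (fun s hs ↦ bound (x := (s, a)) ⟨hs, ha⟩)
          (Metric.mem_ball_self hδ) ht
    _ = c * ‖(t - t₀) • g a‖ := by rw [norm_smul]; ring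

theorem isBigO_sub_of_hasDerivAt (hf : ∀ a t, HasDerivAt (fun s ↦ f s a) (f' t a) t)
    (hf' : (fun q : ℝ × α ↦ f' q.1 q.2) =O[𝓝 t₀ ×ˢ l] fun q ↦ g q.2) :
    (fun q : ℝ × α ↦ f q.1 q.2 - f t₀ q.2) =O[𝓝 t₀ ×ˢ l] fun q ↦ (q.1 - t₀) • g q.2 :=
  let ⟨_, hc⟩ := hf'.isBigOWith
  (isBigOWith_sub_of_hasDerivAt hf hc).isBigO

theorem isLittleO_sub_of_hasDerivAt (hf : ∀ a t, HasDerivAt (fun s ↦ f s a) (f' t a) t)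
    (hf' : (fun q : ℝ × α ↦ f' q.1 q.2) =o[𝓝 t₀ ×ˢ l] fun q ↦ g q.2) :
    (fun q : ℝ × α ↦ f q.1 q.2 - f t₀ q.2) =o[𝓝 t₀ ×ˢ l] fun q ↦ (q.1 - t₀) • g q.2 :=
  .of_isBigOWith fun _ hc ↦ isBigOWith_sub_of_hasDerivAt hf (hf'.forall_isBigOWith hc)

end MeanValue

/-- `ψ` is the flow, defined for all times, of the autonomous vector field `F`. -/
structure IsGlobalFlow {E : Type*} [NormedAddCommGroup E] [NormedSpace ℝ E]
    (F : E → E) (ψ : ℝ → E → E) : Prop where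
  map_zero : ψ 0 = id
  isIntegralCurve : ∀ y, IsIntegralCurve (fun t ↦ ψ t y) fun _ ↦ F

namespace IsGlobalFlow

open Filter Asymptotics Set Topology

variable {E : Type*} [NormedAddCommGroup E] [NormedSpace ℝ E] {F : E → E} {ψ : ℝ → E → E}

theorem map_add (hψ : IsGlobalFlow F ψ) (hF : ContDiff ℝ 1 F) (s t : ℝ) :
    ψ (s + t) = ψ s ∘ ψ t := by
  funext y
  have hcurve : (fun r ↦ ψ (r + t) y) = fun r ↦ ψ r (ψ t y) :=
    isIntegralCurve_eq_of_contDiff (t₀ := 0) hF ((hψ.isIntegralCurve y).comp_add t)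
      (hψ.isIntegralCurve (ψ t y)) (by simp [hψ.map_zero])
  exact congrFun hcurve s

theorem leftInverse_neg (hψ : IsGlobalFlow F ψ) (hF : ContDiff ℝ 1 F) (t : ℝ) :
    Function.LeftInverse (ψ (-t)) (ψ t) := fun y ↦ by
  rw [← Function.comp_apply (f := ψ (-t)), ← hψ.map_add hF, neg_add_cancel, hψ.map_zero, id]

theorem rightInverse_neg (hψ : IsGlobalFlow F ψ) (hF : ContDiff ℝ 1 F) (t : ℝ) :
    Function.RightInverse (ψ (-t)) (ψ t) := by
  have hleft := hψ.leftInverse_neg hF (-t)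
  rwa [neg_neg] at hleft

section Linearization

variable [CompleteSpace E]

theorem isBigO_sub (hψ : IsGlobalFlow F ψ) (hF : ContDiff ℝ 1 F) (z : E) :
    (fun q : ℝ × E ↦ ψ q.1 q.2 - ψ q.1 z) =O[𝓝 0 ×ˢ 𝓝 z] fun q ↦ q.2 - z := by
  obtain ⟨ε, hε, a, r, L, K, hr, picard⟩ :=
    IsPicardLindelof.of_contDiffAt_one (hF.contDiffAt (x := z))
  obtain ⟨α, hα, C, hC⟩ :=
    (picard 0).exists_forall_mem_closedBall_eq_hasDerivWithinAt_lipschitzOnWith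
  have flow_eq : ∀ p ∈ Metric.closedBall z r, EqOn (ψ · p) (α p) (Ioo (0 - ε) (0 + ε)) := by
    intro p hp
    refine isIntegralCurveOn_Ioo_eqOn_of_contDiff (t₀ := 0) (by simp [hε]) hF
      ((hψ.isIntegralCurve p).isIntegralCurveOn _) ?_ ?_
    · exact IsIntegralCurveOn.mono (v := fun _ ↦ F) (hα p hp).2 Ioo_subset_Icc_self
    · rw [(hα p hp).1, hψ.map_zero, id]
  have hz : z ∈ Metric.closedBall z r := Metric.mem_closedBall_self r.2
  have hI : Ioo (0 - ε) (0 + ε) ∈ 𝓝 (0 : ℝ) := Ioo_mem_nhds (by simpa) (by simpa)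
  refine IsBigO.of_bound C ?_
  filter_upwards [prod_mem_prod hI (Metric.closedBall_mem_nhds z hr)] with ⟨s, p⟩ ⟨hs, hp⟩
  simpa only [flow_eq p hp hs, flow_eq z hz hs] using
    (hC s (Ioo_subset_Icc_self hs)).norm_sub_le hp hz

theorem tendsto_nhds (hψ : IsGlobalFlow F ψ) (hF : ContDiff ℝ 1 F) (z : E) :
    Tendsto (fun q : ℝ × E ↦ ψ q.1 q.2) (𝓝 0 ×ˢ 𝓝 z) (𝓝 z) := by
  have space : Tendsto (fun q : ℝ × E ↦ ψ q.1 q.2 - ψ q.1 z) (𝓝 0 ×ˢ 𝓝 z) (𝓝 0) :=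
    (hψ.isBigO_sub hF z).trans_tendsto (tendsto_sub_nhds_zero_iff.2 tendsto_snd)
  have time : Tendsto (fun q : ℝ × E ↦ ψ q.1 z) (𝓝 0 ×ˢ 𝓝 z) (𝓝 z) := by
    have := (hψ.isIntegralCurve z 0).continuousAt.tendsto
    rw [hψ.map_zero] at this
    exact this.comp tendsto_fst
  simpa using space.add time

theorem isLittleO_sub_sub_smul (hψ : IsGlobalFlow F ψ) (hF : ContDiff ℝ 1 F) (z : E) :
    (fun q : ℝ × E ↦ ψ q.1 q.2 - ψ q.1 z - (q.2 - z) - q.1 • fderiv ℝ F z (q.2 - z))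
      =o[𝓝 0 ×ˢ 𝓝 z] fun q ↦ q.1 • (q.2 - z) := by
  set L := fderiv ℝ F z
  have deriv_sub (p : E) (s : ℝ) :
      HasDerivAt (fun s ↦ ψ s p - ψ s z) (F (ψ s p) - F (ψ s z)) s :=
    (hψ.isIntegralCurve p s).sub (hψ.isIntegralCurve z s)
  have strict := (hF.contDiffAt.hasStrictFDerivAt one_ne_zero : HasStrictFDerivAt F L z)
  have tendsto_pair : Tendsto (fun q : ℝ × E ↦ (ψ q.1 q.2, ψ q.1 z)) (𝓝 0 ×ˢ 𝓝 z) (𝓝 (z, z)) :=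
    (hψ.tendsto_nhds hF z).prodMk_nhds
      ((hψ.tendsto_nhds hF z).comp (tendsto_fst.prodMk tendsto_const_nhds))
  have velocity : (fun q : ℝ × E ↦ F (ψ q.1 q.2) - F (ψ q.1 z)) =O[𝓝 0 ×ˢ 𝓝 z]
      fun q ↦ q.2 - z :=
    (strict.isBigO_sub.comp_tendsto tendsto_pair).trans (hψ.isBigO_sub hF z)
  have displacement : (fun q : ℝ × E ↦ ψ q.1 q.2 - ψ q.1 z - (q.2 - z)) =o[𝓝 0 ×ˢ 𝓝 z]
      fun q ↦ q.2 - z := by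
    have bound := isBigO_sub_of_hasDerivAt (g := fun p ↦ p - z) deriv_sub velocity
    simp only [hψ.map_zero, id, sub_zero] at bound
    have time_small : (fun q : ℝ × E ↦ q.1) =o[𝓝 0 ×ˢ 𝓝 z] fun _ ↦ (1 : ℝ) :=
      (isLittleO_one_iff ℝ).2 tendsto_fst
    simpa using bound.trans_isLittleO
      (time_small.smul_isBigO (isBigO_refl (fun q : ℝ × E ↦ q.2 - z) _))
  have acceleration : (fun q : ℝ × E ↦ F (ψ q.1 q.2) - F (ψ q.1 z) - L (q.2 - z))
      =o[𝓝 0 ×ˢ 𝓝 z] fun q ↦ q.2 - z := by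
    have nonlinear := (strict.isLittleO.comp_tendsto tendsto_pair).trans_isBigO
      (hψ.isBigO_sub hF z)
    refine (nonlinear.add ((L.isBigO_comp _ _).trans_isLittleO displacement)).congr_left ?_
    intro q
    simp only [Function.comp_apply, map_sub]
    abel
  have expansion := isLittleO_sub_of_hasDerivAt (g := fun p ↦ p - z)
    (fun p s ↦ (deriv_sub p s).fun_sub ((hasDerivAt_id s).smul_const (L (p - z))))
    (by simpa using acceleration)
  simp only [hψ.map_zero, id, sub_zero, zero_smul] at expansion
  exact expansion.congr_left fun q ↦ sub_right_comm _ _ _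

theorem hasDerivAt_fderiv_zero (hψ : IsGlobalFlow F ψ) (hF : ContDiff ℝ 1 F) {z : E}
    (hd : ∀ t, DifferentiableAt ℝ (ψ t) z) :
    HasDerivAt (fun t ↦ fderiv ℝ (ψ t) z) (fderiv ℝ F z) 0 := by
  set L := fderiv ℝ F z
  rw [hasDerivAt_iff_isLittleO, isLittleO_iff]
  intro c hc
  filter_upwards [((hψ.isLittleO_sub_sub_smul hF z).def hc).curry] with s hs
  rw [hψ.map_zero, fderiv_id, sub_zero]
  have remainder : HasFDerivAt (fun p ↦ ψ s p - p - s • L p)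
      (fderiv ℝ (ψ s) z - ContinuousLinearMap.id ℝ E - s • L) z :=
    ((hd s).hasFDerivAt.sub (hasFDerivAt_id z)).sub (L.hasFDerivAt.const_smul s)
  refine remainder.le_of_lip' (by positivity) ?_
  filter_upwards [hs] with p hp
  calc ‖ψ s p - p - s • L p - (ψ s z - z - s • L z)‖
      = ‖ψ s p - ψ s z - (p - z) - s • L (p - z)‖ := by
        rw [_root_.map_sub, smul_sub]; congr 1; abel
    _ ≤ c * ‖s‖ * ‖p - z‖ := by rwa [norm_smul, ← mul_assoc] at hp

end Linearization

end IsGlobalFlow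

section Determinant

variable {𝕜 E : Type*} [NontriviallyNormedField 𝕜] [NormedAddCommGroup E]
  [NormedSpace 𝕜 E] [FiniteDimensional 𝕜 E]

theorem hasDerivAt_det_one_add_smul (L : E →L[𝕜] E) :
    HasDerivAt (fun s : 𝕜 ↦ (1 + s • L).det) (LinearMap.trace 𝕜 E L.toLinearMap) 0 := by
  let b := Module.finBasis 𝕜 E
  let A := LinearMap.toMatrix b b L.toLinearMap
  let P := (1 + (Polynomial.X : Polynomial 𝕜) • A.map Polynomial.C).det
  have toMatrix_eq (s : 𝕜) :
      LinearMap.toMatrix b b (1 + s • L).toLinearMap = 1 + s • A := by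
    simp only [ContinuousLinearMap.toLinearMap_add, ContinuousLinearMap.toLinearMap_smul,
      ContinuousLinearMap.toLinearMap_one, map_add, map_smul, LinearMap.toMatrix_one, A]
  have det_eq (s : 𝕜) : (1 + s • L).det = P.eval s := by
    rw [ContinuousLinearMap.det, ← LinearMap.det_toMatrix b, toMatrix_eq]
    simp [P, eval_det, ← Matrix.smul_eq_mul_diagonal]
  have deriv_eq : LinearMap.trace 𝕜 E L.toLinearMap = P.derivative.eval 0 := by
    rw [Matrix.derivative_det_one_add_X_smul, LinearMap.trace_eq_matrix_trace 𝕜 b]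
  rw [funext det_eq, deriv_eq]
  exact P.hasDerivAt 0

variable [CompleteSpace 𝕜]

theorem differentiable_continuousLinearMap_det :
    Differentiable 𝕜 (ContinuousLinearMap.det : (E →L[𝕜] E) → 𝕜) := by
  let b := Module.finBasis 𝕜 E
  have det_eq (A : E →L[𝕜] E) : A.det = ∑ σ : Equiv.Perm (Fin (Module.finrank 𝕜 E)),
      ((Equiv.Perm.sign σ : ℤ) : 𝕜) * ∏ i, (b.coord (σ i)).toContinuousLinearMap (A (b i)) := by
    simp [ContinuousLinearMap.det, ← LinearMap.det_toMatrix b, Matrix.det_apply',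
      LinearMap.toMatrix_apply]
  rw [funext det_eq]
  fun_prop

theorem fderiv_det_one (L : E →L[𝕜] E) :
    fderiv 𝕜 ContinuousLinearMap.det 1 L = LinearMap.trace 𝕜 E L.toLinearMap := by
  have hdet := (differentiable_continuousLinearMap_det (1 : E →L[𝕜] E)).hasFDerivAt
  exact (hdet.hasLineDerivAt L).unique (hasDerivAt_det_one_add_smul L)

end Determinant

namespace IsGlobalFlow

variable {E : Type*} [NormedAddCommGroup E] [NormedSpace ℝ E] [FiniteDimensional ℝ E]
  {F : E → E} {ψ : ℝ → E → E}

theorem hasDerivAt_det_fderiv (hψ : IsGlobalFlow F ψ) (hF : ContDiff ℝ 1 F)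
    (hd : ∀ t, Differentiable ℝ (ψ t)) (y : E) (t : ℝ) :
    HasDerivAt (fun s ↦ (fderiv ℝ (ψ s) y).det)
      (divg F (ψ t y) * (fderiv ℝ (ψ t) y).det) t := by
  have hcomplete : CompleteSpace E := FiniteDimensional.complete ℝ E
  have at_zero (z : E) : HasDerivAt (fun s ↦ (fderiv ℝ (ψ s) z).det) (divg F z) 0 := by
    have hid : fderiv ℝ (ψ 0) z = 1 := by rw [hψ.map_zero, fderiv_id]; rfl
    have hdet := (differentiable_continuousLinearMap_det (fderiv ℝ (ψ 0) z)).hasFDerivAt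
    have := hdet.comp_hasDerivAt 0 (hψ.hasDerivAt_fderiv_zero hF fun t ↦ hd t z)
    rwa [hid, fderiv_det_one] at this
  have chain_rule (s : ℝ) : (fderiv ℝ (ψ s) y).det =
      (fderiv ℝ (ψ (s - t)) (ψ t y)).det * (fderiv ℝ (ψ t) y).det := by
    rw [← LinearMap.det_comp, ← ContinuousLinearMap.toLinearMap_comp,
      ← fderiv_comp y (hd _ _) (hd _ _), ← hψ.map_add hF, sub_add_cancel]
  rw [funext chain_rule]
  have shifted := HasDerivAt.comp_sub_const t t (f := fun s ↦ (fderiv ℝ (ψ s) (ψ t y)).det)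
    (by simpa only [sub_self] using at_zero (ψ t y))
  exact shifted.mul_const _

theorem det_fderiv_eq_one (hψ : IsGlobalFlow F ψ) (hF : ContDiff ℝ 1 F)
    (hdiv : ∀ x, divg F x = 0) (hd : ∀ t, Differentiable ℝ (ψ t)) (t : ℝ) (y : E) :
    (fderiv ℝ (ψ t) y).det = 1 := by
  have stationary (s : ℝ) : HasDerivAt (fun s ↦ (fderiv ℝ (ψ s) y).det) 0 s := by
    simpa only [hdiv, zero_mul] using hψ.hasDerivAt_det_fderiv hF hd y s
  calc (fderiv ℝ (ψ t) y).det = (fderiv ℝ (ψ 0) y).det :=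
        is_const_of_deriv_eq_zero (fun s ↦ (stationary s).differentiableAt)
          (fun s ↦ (stationary s).deriv) t 0
    _ = 1 := by rw [hψ.map_zero, fderiv_id]; exact LinearMap.det_id

variable [MeasurableSpace E] [BorelSpace E] (μ : Measure E) [μ.IsAddHaarMeasure]

theorem addHaar_image_of_measurableSet (hψ : IsGlobalFlow F ψ) (hF : ContDiff ℝ 1 F)
    (hdiv : ∀ x, divg F x = 0) (hd : ∀ t, Differentiable ℝ (ψ t)) (t : ℝ) {A : Set E}
    (hA : MeasurableSet A) : μ (ψ t '' A) = μ A := by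
  rw [← lintegral_abs_det_fderiv_eq_addHaar_image μ hA
    (fun x _ ↦ (hd t x).hasFDerivAt.hasFDerivWithinAt) (hψ.leftInverse_neg hF t).injective.injOn]
  simp only [hψ.det_fderiv_eq_one hF hdiv hd, abs_one, ENNReal.ofReal_one, setLIntegral_one]

theorem measurePreserving (hψ : IsGlobalFlow F ψ) (hF : ContDiff ℝ 1 F)
    (hdiv : ∀ x, divg F x = 0) (hd : ∀ t, Differentiable ℝ (ψ t)) (t : ℝ) :
    MeasurePreserving (ψ t) μ μ := by
  refine ⟨(hd t).continuous.measurable, Measure.ext fun A hA ↦ ?_⟩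
  rw [Measure.map_apply (hd t).continuous.measurable hA,
    ← Set.image_eq_preimage_of_inverse (hψ.rightInverse_neg hF t) (hψ.leftInverse_neg hF t),
    hψ.addHaar_image_of_measurableSet μ hF hdiv hd (-t) hA]

theorem addHaar_image (hψ : IsGlobalFlow F ψ) (hF : ContDiff ℝ 1 F)
    (hdiv : ∀ x, divg F x = 0) (hd : ∀ t, Differentiable ℝ (ψ t)) (t : ℝ) (A : Set E) :
    μ (ψ t '' A) = μ A := by
  rw [Set.image_eq_preimage_of_inverse (hψ.leftInverse_neg hF t) (hψ.rightInverse_neg hF t)]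
  exact (hψ.measurePreserving μ hF hdiv hd (-t)).measure_preimage_emb
    ((hd (-t)).continuous.measurableEmbedding (hψ.rightInverse_neg hF t).injective) A

end IsGlobalFlow

section Trace

variable {R M N : Type*} [CommRing R] [AddCommGroup M] [Module R M] [Module.Free R M]
  [Module.Finite R M] [AddCommGroup N] [Module R N] [Module.Free R N] [Module.Finite R N]

open LinearMap in
theorem trace_prod_eq_trace_fst_add_trace_snd (A : M × N →ₗ[R] M × N) :
    trace R (M × N) A =
      trace R M (fst R M N ∘ₗ A ∘ₗ inl R M N) + trace R N (snd R M N ∘ₗ A ∘ₗ inr R M N) := by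
  have split : A = (A ∘ₗ inl R M N) ∘ₗ fst R M N + (A ∘ₗ inr R M N) ∘ₗ snd R M N := by
    refine LinearMap.ext fun p ↦ ?_
    simp only [LinearMap.add_apply, comp_apply, ← map_add, fst_apply, snd_apply, inl_apply,
      inr_apply, Prod.fst_add_snd]
  conv_lhs => rw [split]
  rw [map_add, trace_comp_comm', trace_comp_comm' (A ∘ₗ inr R M N)]

end Trace

section Hamiltonian

open InnerProductSpace

variable {V : Type*} [NormedAddCommGroup V] [InnerProductSpace ℝ V]

section CompleteSpace

variable [CompleteSpace V]

/-- The Hamiltonian vector field `(∇_v H, -∇_x H)` of a function `H (x, v)` on the phase space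
`V × V`. -/
noncomputable def hamiltonianField (H : V × V → ℝ) (p : V × V) : V × V :=
  (gradient (fun v ↦ H (p.1, v)) p.2, -gradient (fun x ↦ H (x, p.2)) p.1)

variable (V) in
/-- The Poisson tensor of the phase space `V × V`, sending the covector `α` to the vector `X` that
satisfies `⟪X.1, w⟫ = α (0, w)` and `⟪X.2, w⟫ = -α (w, 0)`. -/
noncomputable def poissonTensor : StrongDual ℝ (V × V) →L[ℝ] V × V :=
  let riesz : StrongDual ℝ V →L[ℝ] V :=
    (toDual ℝ V).symm.toContinuousLinearEquiv.toContinuousLinearMap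
  (riesz ∘L (ContinuousLinearMap.inr ℝ V V).precomp ℝ).prod
    (-(riesz ∘L (ContinuousLinearMap.inl ℝ V V).precomp ℝ))

theorem inner_poissonTensor_fst (α : StrongDual ℝ (V × V)) (w : V) :
    inner ℝ (poissonTensor V α).1 w = α (0, w) :=
  toDual_symm_apply

theorem inner_poissonTensor_snd (α : StrongDual ℝ (V × V)) (w : V) :
    inner ℝ (poissonTensor V α).2 w = -α (w, 0) :=
  (inner_neg_left _ _).trans (congrArg Neg.neg toDual_symm_apply)

theorem hamiltonianField_eq_poissonTensor {H : V × V → ℝ} (hH : Differentiable ℝ H) :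
    hamiltonianField H = fun p ↦ poissonTensor V (fderiv ℝ H p) := by
  funext p
  have hp : HasFDerivAt H (fderiv ℝ H p) (p.1, p.2) := (hH p).hasFDerivAt
  have velocity : HasFDerivAt (fun v ↦ H (p.1, v)) _ p.2 :=
    hp.comp p.2 (hasFDerivAt_prodMk_right p.1 p.2)
  have position : HasFDerivAt (fun x ↦ H (x, p.2)) _ p.1 :=
    hp.comp p.1 (hasFDerivAt_prodMk_left p.1 p.2)
  rw [hamiltonianField, gradient, gradient, velocity.fderiv, position.fderiv]
  rfl

theorem contDiff_hamiltonianField {H : V × V → ℝ} (hH : ContDiff ℝ 2 H) :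
    ContDiff ℝ 1 (hamiltonianField H) := by
  rw [hamiltonianField_eq_poissonTensor (hH.differentiable two_ne_zero)]
  exact (poissonTensor V).contDiff.comp (hH.fderiv_right (m := 1) (by norm_num))

end CompleteSpace

variable [FiniteDimensional ℝ V]

theorem trace_poissonTensor_comp {B : V × V →L[ℝ] StrongDual ℝ (V × V)}
    (hB : ∀ u w, B u w = B w u) :
    LinearMap.trace ℝ (V × V) (poissonTensor V ∘L B).toLinearMap = 0 := by
  let b := stdOrthonormalBasis ℝ V
  rw [trace_prod_eq_trace_fst_add_trace_snd, LinearMap.trace_eq_sum_inner _ b,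
    LinearMap.trace_eq_sum_inner _ b, ← Finset.sum_add_distrib]
  refine Finset.sum_eq_zero fun i _ ↦ ?_
  calc inner ℝ (b i) (poissonTensor V (B (b i, 0))).1
        + inner ℝ (b i) (poissonTensor V (B (0, b i))).2
      = B (b i, 0) (0, b i) + -B (0, b i) (b i, 0) := by
        rw [real_inner_comm, inner_poissonTensor_fst, real_inner_comm, inner_poissonTensor_snd]
    _ = 0 := by rw [hB, add_neg_cancel]

theorem divg_hamiltonianField {H : V × V → ℝ} (hH : ContDiff ℝ 2 H) (p : V × V) :
    divg (hamiltonianField H) p = 0 := by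
  have hdiff : DifferentiableAt ℝ (fderiv ℝ H) p :=
    (hH.fderiv_right (m := 1) (by norm_num)).differentiable one_ne_zero p
  have jacobian : HasFDerivAt (fun q ↦ poissonTensor V (fderiv ℝ H q))
      (poissonTensor V ∘L fderiv ℝ (fderiv ℝ H) p) p :=
    HasFDerivAt.comp (𝕜 := ℝ) (F := StrongDual ℝ (V × V)) p (poissonTensor V).hasFDerivAt
      hdiff.hasFDerivAt
  rw [divg, hamiltonianField_eq_poissonTensor (hH.differentiable two_ne_zero), jacobian.fderiv]
  exact trace_poissonTensor_comp (hH.contDiffAt.isSymmSndFDerivAt (by simp))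

end Hamiltonian

theorem liouville_volume_preservation_general
    {E : Type*} [NormedAddCommGroup E] [NormedSpace ℝ E] [FiniteDimensional ℝ E]
    [MeasurableSpace E] [BorelSpace E] (μ : Measure E) [μ.IsAddHaarMeasure]
    {V : Type*} [NormedAddCommGroup V] [InnerProductSpace ℝ V] [FiniteDimensional ℝ V]
    [MeasurableSpace V] [BorelSpace V] (ν : Measure (V × V)) [ν.IsAddHaarMeasure]
    {F : E → E} (hF : ContDiff ℝ 1 F) (hdivF : ∀ x, divg F x = 0)
    {ψ : ℝ → E → E} (hψ : IsGlobalFlow F ψ) (hψd : ∀ t, Differentiable ℝ (ψ t)) :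
    (∀ t A, μ (ψ t '' A) = μ A) ∧
      ∀ H : V × V → ℝ, ContDiff ℝ 2 H → (∀ p, divg (hamiltonianField H) p = 0) ∧
        ∀ χ : ℝ → V × V → V × V, IsGlobalFlow (hamiltonianField H) χ →
          (∀ t, Differentiable ℝ (χ t)) → ∀ t A, ν (χ t '' A) = ν A :=
  ⟨hψ.addHaar_image μ hF hdivF hψd, fun _ hH ↦ ⟨divg_hamiltonianField hH, fun _ hχ hχd ↦
    hχ.addHaar_image ν (contDiff_hamiltonianField hH) (divg_hamiltonianField hH) hχd⟩⟩

/-- Liouville's theorem: the flow of a divergence-free `C¹` vector field that is a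
diffeomorphism at each time preserves Lebesgue volume; in particular, the
Hamiltonian vector field `(x,v) ↦ (∇_v H, −∇_x H)` of a `C²` Hamiltonian is
divergence-free, and hence its flow preserves volume. -/
theorem liouville_volume_preservation
    {n d : ℕ}
    -- Part 1: general divergence-free fields.
    (F : EuclideanSpace ℝ (Fin n) → EuclideanSpace ℝ (Fin n))
    (hF : ContDiff ℝ 1 F) (hdivF : ∀ x, divg F x = 0)
    (ψ : ℝ → EuclideanSpace ℝ (Fin n) → EuclideanSpace ℝ (Fin n))
    (hψ0 : ψ 0 = id)
    (hψode : ∀ y t, HasDerivAt (fun s => ψ s y) (F (ψ t y)) t)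
    (hψbij : ∀ t, Function.Bijective (ψ t))
    (hψsmooth : ∀ t, ContDiff ℝ 1 (ψ t))
    (hψinv : ∀ t, ContDiff ℝ 1 (Function.invFun (ψ t))) :
    (∀ t : ℝ, 0 ≤ t → ∀ A : Set (EuclideanSpace ℝ (Fin n)),
        MeasurableSet A → volume (ψ t '' A) = volume A) ∧
      -- Part 2: Hamiltonian vector fields are divergence-free, so their flows
      -- preserve volume.
      ∀ (H : EuclideanSpace ℝ (Fin d) × EuclideanSpace ℝ (Fin d) → ℝ),
        ContDiff ℝ 2 H →
        (∀ p : EuclideanSpace ℝ (Fin d) × EuclideanSpace ℝ (Fin d),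
          divg (fun q => (gradient (fun v => H (q.1, v)) q.2,
            -gradient (fun x => H (x, q.2)) q.1)) p = 0) ∧
        ∀ (χ : ℝ → EuclideanSpace ℝ (Fin d) × EuclideanSpace ℝ (Fin d) →
            EuclideanSpace ℝ (Fin d) × EuclideanSpace ℝ (Fin d)),
          χ 0 = id →
          (∀ p t, HasDerivAt (fun s => χ s p)
            (gradient (fun v => H ((χ t p).1, v)) (χ t p).2,
              -gradient (fun x => H (x, (χ t p).2)) (χ t p).1) t) →
          (∀ t, Function.Bijective (χ t)) →
          (∀ t, ContDiff ℝ 1 (χ t)) →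
          (∀ t, ContDiff ℝ 1 (Function.invFun (χ t))) →
          ∀ t : ℝ, 0 ≤ t →
            ∀ A : Set (EuclideanSpace ℝ (Fin d) × EuclideanSpace ℝ (Fin d)),
              MeasurableSet A → volume (χ t '' A) = volume A := by
  let Q := EuclideanSpace ℝ (Fin d)
  have : (volume : Measure (Q × Q)).IsAddHaarMeasure := Measure.prod.instIsAddHaarMeasure _ _
  obtain ⟨general, hamiltonian⟩ := liouville_volume_preservation_general volume
    (volume : Measure (Q × Q)) hF hdivF ⟨hψ0, hψode⟩
    fun t ↦ (hψsmooth t).differentiable one_ne_zero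
  exact ⟨fun t _ A _ ↦ general t A, fun H hH ↦ ⟨(hamiltonian H hH).1,
    fun χ hχ0 hχode _ hχsmooth _ t _ A _ ↦ (hamiltonian H hH).2 χ ⟨hχ0, hχode⟩
      (fun t ↦ (hχsmooth t).differentiable one_ne_zero) t A⟩⟩
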